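/- Assume the additive-noise setting, let c, β ∈ [0,∞) and assume that x·μ(x) ≤ c(1+x²) for all x ∈ (0,∞). Then for every t ∈ [0,T] it holds that E[ exp( (1+(X_t)²)/e^{2t(c+1)+tβ} + ∫_0^t β(1+(X_s)²)/e^{2s(c+1)+sβ} ds ) ] ≤ E[ exp(1+(X_0)²) ]. -/

import Mathlib

/-!
Partition `[0, t]` uniformly. The discounted Lyapunov function `e ^ (-κ s) (1 + x ^ 2)` with
`κ = 2 (c + 1) + β` changes over one step by `e ^ (-κ q) (2 y z + z ^ 2)`, where `y` is the old
state and `z` the Brownian increment, plus drift terms. Given the past, `z` is Gaussian, so the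
exponential of this noise term, suitably compensated, has conditional mean at most `1`; multiplying
over the steps gives an exponential moment bound at every mesh. Pathwise, the drift terms are
Riemann sums whose limit is at most `-β ∫ e ^ (-κ s) (1 + x ^ 2) ds`, by the growth condition on
the drift. Fatou's lemma transfers the bound to the limit, so no stochastic integral is needed.
-/

open MeasureTheory ProbabilityTheory Filter Set
open scoped ENNReal NNReal

noncomputable section

lemma inv_sqrt_one_sub_le_exp {y : ℝ} (hy : y < 1) :
    (√(1 - y))⁻¹ ≤ Real.exp (y / (2 * (1 - y))) := by
  have hpos : 0 < 1 - y := sub_pos.2 hy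
  rw [← Real.sqrt_inv]
  apply Real.sqrt_le_iff.2 ⟨(Real.exp_pos _).le, ?_⟩
  calc (1 - y)⁻¹ = y / (1 - y) + 1 := by field_simp; ring
    _ ≤ Real.exp (y / (1 - y)) := Real.add_one_le_exp _
    _ = Real.exp (y / (2 * (1 - y))) ^ 2 := by
      rw [← Real.exp_nat_mul]; congr 1; push_cast; field_simp

lemma exp_quadratic_mul_gaussianPDFReal {v v' : ℝ≥0} {q : ℝ} (hv : v ≠ 0) (hq : 2 * q * v < 1)
    (hv' : (v' : ℝ) = v / (1 - 2 * q * v)) (p w : ℝ) :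
    gaussianPDFReal 0 v w * Real.exp (q * w ^ 2 + p * w) =
      (√(1 - 2 * q * v))⁻¹ * Real.exp (p ^ 2 * v / (2 * (1 - 2 * q * v))) *
        gaussianPDFReal (p * v') v' w := by
  have hd : 0 < 1 - 2 * q * v := sub_pos.2 hq
  have hv0 : (v : ℝ) ≠ 0 := by exact_mod_cast hv
  have hsqrt : √(2 * Real.pi * v) = √(1 - 2 * q * v) * √(2 * Real.pi * v') := by
    rw [← Real.sqrt_mul hd.le, hv', mul_left_comm, mul_div_cancel₀ _ hd.ne']
  have hexp : -(w - 0) ^ 2 / (2 * v) + (q * w ^ 2 + p * w) =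
      p ^ 2 * v / (2 * (1 - 2 * q * v)) + -(w - p * v') ^ 2 / (2 * v') := by
    rw [hv']
    generalize hD : 1 - 2 * q * (v : ℝ) = D at hd
    have : q = (1 - D) / (2 * v) := by rw [← hD]; field_simp; ring
    rw [this]; field_simp; ring
  simp only [gaussianPDFReal]
  rw [mul_assoc, ← Real.exp_add, hexp, Real.exp_add, hsqrt, mul_inv]
  ring

lemma lintegral_exp_quadratic_gaussianReal {v : ℝ≥0} {q : ℝ} (hq : 2 * q * v < 1) (p : ℝ) :
    ∫⁻ w, ENNReal.ofReal (Real.exp (q * w ^ 2 + p * w)) ∂(gaussianReal 0 v) =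
      ENNReal.ofReal
        ((√(1 - 2 * q * v))⁻¹ * Real.exp (p ^ 2 * v / (2 * (1 - 2 * q * v)))) := by
  rcases eq_or_ne v 0 with rfl | hv
  · simp
  have hd : 0 < 1 - 2 * q * v := sub_pos.2 hq
  set v' : ℝ≥0 := (v / (1 - 2 * q * v) : ℝ).toNNReal
  have hv' : (v' : ℝ) = v / (1 - 2 * q * v) :=
    Real.coe_toNNReal _ (div_nonneg v.2 hd.le)
  have hv'0 : v' ≠ 0 := (Real.toNNReal_pos.2 (div_pos (by positivity) hd)).ne'
  rw [gaussianReal_of_var_ne_zero _ hv,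
    lintegral_withDensity_eq_lintegral_mul _ (measurable_gaussianPDF _ _) (by fun_prop)]
  simp only [Pi.mul_apply, gaussianPDF, ← ENNReal.ofReal_mul (gaussianPDFReal_nonneg _ _ _),
    exp_quadratic_mul_gaussianPDFReal hv hq hv' p]
  simp only [ENNReal.ofReal_mul (show 0 ≤ (√(1 - 2 * q * v))⁻¹ *
    Real.exp (p ^ 2 * v / (2 * (1 - 2 * q * v))) by positivity)]
  rw [lintegral_const_mul _ (by fun_prop), lintegral_gaussianPDFReal_eq_one _ hv'0, mul_one]

lemma lintegral_exp_sq_increment_gaussianReal_le {v : ℝ≥0} {a : ℝ} (ha : 0 ≤ a) (ha' : a ≤ 1)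
    (hv : 2 * (v : ℝ) < 1) (y : ℝ) :
    ∫⁻ z, ENNReal.ofReal (Real.exp (a * (2 * y * z + z ^ 2))) ∂(gaussianReal 0 v) ≤
      ENNReal.ofReal (Real.exp (2 * (v / (1 - 2 * v)) * (a * (1 + y ^ 2)))) := by
  have hav : a * v ≤ v := mul_le_of_le_one_left v.2 ha'
  have hq : 2 * a * v < 1 := by linarith
  have hd : 0 < 1 - 2 * a * v := sub_pos.2 hq
  have hexponent : 2 * a * v / (2 * (1 - 2 * a * v)) +
      (2 * a * y) ^ 2 * v / (2 * (1 - 2 * a * v)) ≤ 2 * (v / (1 - 2 * v)) * (a * (1 + y ^ 2)) :=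
    calc _ = v / (1 - 2 * a * v) * (a * (1 + 2 * a * y ^ 2)) := by field_simp
      _ ≤ v / (1 - 2 * v) * (a * (2 * (1 + y ^ 2))) := by
        have hsq : a * y ^ 2 ≤ y ^ 2 := mul_le_of_le_one_left (sq_nonneg y) ha'
        gcongr ?_ * (a * ?_)
        · exact div_le_div_of_nonneg_left v.2 (by linarith) (by linarith)
        · linarith
      _ = _ := by ring
  simp only [show ∀ z : ℝ, a * (2 * y * z + z ^ 2) = a * z ^ 2 + 2 * a * y * z by intro z; ring]
  rw [lintegral_exp_quadratic_gaussianReal hq]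
  apply ENNReal.ofReal_le_ofReal
  calc _ ≤ Real.exp (2 * a * v / (2 * (1 - 2 * a * v))) *
        Real.exp ((2 * a * y) ^ 2 * v / (2 * (1 - 2 * a * v))) := by
        gcongr; exact inv_sqrt_one_sub_le_exp hq
    _ ≤ _ := by rw [← Real.exp_add]; exact Real.exp_le_exp.2 hexponent

section Independence

variable {Ω E E' : Type*} {m mΩ : MeasurableSpace Ω} [MeasurableSpace E] [MeasurableSpace E']
  {P : Measure Ω} [IsFiniteMeasure P]

lemma lintegral_mul_le_of_indep (hm : m ≤ mΩ) {g : Ω → ℝ≥0∞}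
    (hg : Measurable[m] g) {x : Ω → E} (hx : Measurable[m] x) {w : Ω → E'} (hw : Measurable w)
    (hind : Indep (MeasurableSpace.comap w inferInstance) m P) {φ : E → E' → ℝ≥0∞}
    (hφ : Measurable (Function.uncurry φ)) (hφ_le : ∀ y, ∫⁻ z, φ y z ∂(P.map w) ≤ 1) :
    ∫⁻ ω, g ω * φ (x ω) (w ω) ∂P ≤ ∫⁻ ω, g ω ∂P := by
  have hgx : Measurable[m] fun ω => (g ω, x ω) := hg.prodMk hx
  have hgx' : Measurable fun ω => (g ω, x ω) := hgx.mono hm le_rfl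
  have hindep : IndepFun (fun ω => (g ω, x ω)) w P :=
    (IndepFun_iff_Indep _ _ _).2 (indep_of_indep_of_le_right hind hgx.comap_le).symm
  have hf : Measurable fun u : (ℝ≥0∞ × E) × E' => u.1.1 * φ u.1.2 u.2 :=
    (measurable_fst.comp measurable_fst).mul
      (hφ.comp ((measurable_snd.comp measurable_fst).prodMk measurable_snd))
  calc ∫⁻ ω, g ω * φ (x ω) (w ω) ∂P
      = ∫⁻ u, u.1.1 * φ u.1.2 u.2 ∂(P.map fun ω => ((g ω, x ω), w ω)) :=
        (lintegral_map hf (hgx'.prodMk hw)).symm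
    _ = ∫⁻ ω, ∫⁻ z, g ω * φ (x ω) z ∂(P.map w) ∂P := by
        rw [(indepFun_iff_map_prod_eq_prod_map_map hgx'.aemeasurable hw.aemeasurable).1 hindep,
          lintegral_prod _ hf.aemeasurable, lintegral_map hf.lintegral_prod_right' hgx']
    _ ≤ ∫⁻ ω, g ω ∂P := by
        gcongr with ω
        rw [lintegral_const_mul _ hφ.of_uncurry_left]
        exact mul_le_of_le_one_right' (hφ_le _)

variable {F : Filtration ℕ mΩ} {g : Ω → ℝ≥0∞} {x : ℕ → Ω → E} {w : ℕ → Ω → E'}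
  {φ : ℕ → E → E' → ℝ≥0∞} {n : ℕ}

lemma measurable_mul_prod_of_adapted (hg : Measurable[F 0] g) (hx : ∀ k < n, Measurable[F k] (x k))
    (hw : ∀ k < n, Measurable[F (k + 1)] (w k)) (hφ : ∀ k, Measurable (Function.uncurry (φ k))) :
    Measurable[F n] fun ω => g ω * ∏ k ∈ Finset.range n, φ k (x k ω) (w k ω) := by
  refine (hg.mono (F.mono n.zero_le) le_rfl).mul (Finset.measurable_prod _ fun k hk => ?_)
  have hkn : k < n := Finset.mem_range.1 hk
  exact (hφ k).comp (((hx k hkn).mono (F.mono hkn.le) le_rfl).prodMk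
    ((hw k hkn).mono (F.mono hkn) le_rfl))

lemma lintegral_mul_prod_le_of_indep (hg : Measurable[F 0] g)
    (hx : ∀ k < n, Measurable[F k] (x k)) (hw : ∀ k < n, Measurable[F (k + 1)] (w k))
    (hind : ∀ k < n, Indep (MeasurableSpace.comap (w k) inferInstance) (F k) P)
    (hφ : ∀ k, Measurable (Function.uncurry (φ k)))
    (hφ_le : ∀ k < n, ∀ y, ∫⁻ z, φ k y z ∂(P.map (w k)) ≤ 1) :
    ∫⁻ ω, g ω * ∏ k ∈ Finset.range n, φ k (x k ω) (w k ω) ∂P ≤ ∫⁻ ω, g ω ∂P := by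
  induction n with
  | zero => simp
  | succ n ih =>
    have hn := n.lt_succ_self
    have hlt : ∀ k < n, k < n + 1 := fun k hk => hk.trans hn
    simp only [Finset.prod_range_succ, ← mul_assoc]
    calc _ ≤ ∫⁻ ω, g ω * ∏ k ∈ Finset.range n, φ k (x k ω) (w k ω) ∂P :=
          lintegral_mul_le_of_indep (F.le n)
            (measurable_mul_prod_of_adapted hg (fun k hk => hx k (hlt k hk))
              (fun k hk => hw k (hlt k hk)) hφ)
            (hx n hn) ((hw n hn).mono (F.le _) le_rfl) (hind n hn) (hφ n) (hφ_le n hn)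
      _ ≤ _ := ih (fun k hk => hx k (hlt k hk)) (fun k hk => hw k (hlt k hk))
          (fun k hk => hind k (hlt k hk)) (fun k hk => hφ_le k (hlt k hk))

end Independence

lemma lintegral_exp_le_of_asymptotic_le {Ω : Type*} {mΩ : MeasurableSpace Ω} {P : Measure Ω}
    {Y : Ω → ℝ} {S : ℕ → Ω → ℝ} {C : ℝ≥0∞} (hS : ∀ n, Measurable (S n))
    (hY : ∀ᵐ ω ∂P, ∃ r : ℕ → ℝ, Tendsto r atTop (nhds 0) ∧ ∀ᶠ n in atTop, Y ω ≤ S n ω + r n)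
    (hC : ∀ᶠ n in atTop, ∫⁻ ω, ENNReal.ofReal (Real.exp (S n ω)) ∂P ≤ C) :
    ∫⁻ ω, ENNReal.ofReal (Real.exp (Y ω)) ∂P ≤ C := by
  calc ∫⁻ ω, ENNReal.ofReal (Real.exp (Y ω)) ∂P
      ≤ ∫⁻ ω, liminf (fun n => ENNReal.ofReal (Real.exp (S n ω))) atTop ∂P := by
        apply lintegral_mono_ae
        filter_upwards [hY] with ω ⟨r, hr, hle⟩
        have hlim : Tendsto (fun n => ENNReal.ofReal (Real.exp (Y ω - r n))) atTop
            (nhds (ENNReal.ofReal (Real.exp (Y ω)))) := by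
          refine ENNReal.tendsto_ofReal ((Real.continuous_exp.tendsto _).comp ?_)
          simpa only [sub_zero] using hr.const_sub (Y ω)
        rw [← hlim.liminf_eq]
        refine liminf_le_liminf (hle.mono fun n hn => ?_)
        gcongr
        linarith
    _ ≤ liminf (fun n => ∫⁻ ω, ENNReal.ofReal (Real.exp (S n ω)) ∂P) atTop :=
        lintegral_liminf_le fun n => by fun_prop
    _ ≤ C := liminf_le_of_frequently_le' hC.frequently

/-- The `k`-th node of the uniform partition of `[0, t]` into `n` intervals. For `n = 0` every
node is `0`, because `t / 0 = 0`. -/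
def gridPoint (t : ℝ) (n k : ℕ) : ℝ := k * (t / n)

section Grid

variable {t : ℝ} {n : ℕ}

lemma gridPoint_zero : gridPoint t n 0 = 0 := by simp [gridPoint]

lemma gridPoint_self (hn : n ≠ 0) : gridPoint t n n = t := by
  have : (n : ℝ) ≠ 0 := Nat.cast_ne_zero.2 hn
  simp only [gridPoint]; field_simp

lemma gridPoint_succ_sub (k : ℕ) : gridPoint t n (k + 1) - gridPoint t n k = t / n := by
  simp only [gridPoint, Nat.cast_succ]; ring

lemma gridPoint_mono (ht : 0 ≤ t) : Monotone (gridPoint t n) := fun i j hij => by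
  unfold gridPoint; gcongr

lemma gridPoint_mem_Icc (ht : 0 ≤ t) {k : ℕ} (hk : k ≤ n) : gridPoint t n k ∈ Icc 0 t := by
  refine ⟨gridPoint_zero (t := t) (n := n) ▸ gridPoint_mono ht k.zero_le, ?_⟩
  rcases eq_or_ne n 0 with rfl | hn
  · simpa [gridPoint] using ht
  · exact (gridPoint_mono ht hk).trans_eq (gridPoint_self hn)

lemma Icc_gridPoint_subset (ht : 0 ≤ t) {k : ℕ} (hk : k < n) :
    Icc (gridPoint t n k) (gridPoint t n (k + 1)) ⊆ Icc 0 t :=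
  Icc_subset_Icc (gridPoint_mem_Icc ht hk.le).1 (gridPoint_mem_Icc ht hk).2

lemma intervalIntegrable_gridPoint {f : ℝ → ℝ} (ht : 0 ≤ t)
    (hf : IntervalIntegrable f volume 0 t) {k : ℕ} (hk : k < n) :
    IntervalIntegrable f volume (gridPoint t n k) (gridPoint t n (k + 1)) :=
  hf.mono_set (by
    rw [uIcc_of_le (gridPoint_mono ht k.le_succ), uIcc_of_le ht]
    exact Icc_gridPoint_subset ht hk)

lemma sum_integral_gridPoint {f : ℝ → ℝ} (ht : 0 ≤ t) (hf : IntervalIntegrable f volume 0 t)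
    (hn : n ≠ 0) :
    ∑ k ∈ Finset.range n, ∫ s in gridPoint t n k..gridPoint t n (k + 1), f s =
      ∫ s in (0 : ℝ)..t, f s := by
  rw [intervalIntegral.sum_integral_adjacent_intervals (a := gridPoint t n)
    fun k hk => intervalIntegrable_gridPoint ht hf hk, gridPoint_zero, gridPoint_self hn]

lemma abs_const_mul_integral_sub_le {f g : ℝ → ℝ} {p q δ y : ℝ} (hpq : p ≤ q)
    (hg : IntervalIntegrable g volume p q)
    (hfg : IntervalIntegrable (fun s => f s * g s) volume p q)
    (hf : ∀ s ∈ Icc p q, |y - f s| ≤ δ) :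
    |y * (∫ s in p..q, g s) - ∫ s in p..q, f s * g s| ≤ δ * ∫ s in p..q, |g s| := by
  rw [← intervalIntegral.integral_const_mul, ← intervalIntegral.integral_const_mul,
    ← intervalIntegral.integral_sub (hg.const_mul y) hfg]
  refine (intervalIntegral.abs_integral_le_integral_abs hpq).trans
    (intervalIntegral.integral_mono_on hpq ((hg.const_mul y).sub hfg).abs
      (hg.abs.const_mul δ) fun s hs => ?_)
  rw [← sub_mul, abs_mul]
  gcongr
  exact hf s hs

lemma tendsto_div_natCast_atTop (t : ℝ) : Tendsto (fun n : ℕ => t / n) atTop (nhds 0) :=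
  tendsto_natCast_atTop_atTop.const_div_atTop t

lemma abs_sum_tag_mul_integral_sub_le {f g : ℝ → ℝ} {δ : ℝ} (ht : 0 ≤ t)
    (hg : IntervalIntegrable g volume 0 t)
    (hfg : IntervalIntegrable (fun s => f s * g s) volume 0 t) (hn : n ≠ 0)
    (hf : ∀ r ∈ Icc 0 t, ∀ s ∈ Icc 0 t, |r - s| ≤ t / n → |f r - f s| ≤ δ) {τ : ℕ → ℝ}
    (hτ : ∀ k < n, τ k ∈ Icc (gridPoint t n k) (gridPoint t n (k + 1))) :
    |∑ k ∈ Finset.range n, f (τ k) * (∫ s in gridPoint t n k..gridPoint t n (k + 1), g s) -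
        ∫ s in (0 : ℝ)..t, f s * g s| ≤ δ * ∫ s in (0 : ℝ)..t, |g s| := by
  rw [← sum_integral_gridPoint ht hfg hn, ← sum_integral_gridPoint ht hg.abs hn,
    ← Finset.sum_sub_distrib, Finset.mul_sum]
  refine (Finset.abs_sum_le_sum_abs _ _).trans (Finset.sum_le_sum fun k hk => ?_)
  have hkn : k < n := Finset.mem_range.1 hk
  have hsub := Icc_gridPoint_subset ht hkn
  refine abs_const_mul_integral_sub_le (gridPoint_mono ht k.le_succ)
    (intervalIntegrable_gridPoint ht hg hkn) (intervalIntegrable_gridPoint ht hfg hkn)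
    fun s hs => hf _ (hsub (hτ k hkn)) s (hsub hs) ?_
  exact (Real.dist_le_of_mem_Icc (hτ k hkn) hs).trans_eq (gridPoint_succ_sub k)

lemma tendsto_sum_tag_mul_integral {f g : ℝ → ℝ} (ht : 0 ≤ t) (hf : ContinuousOn f (Icc 0 t))
    (hg : IntervalIntegrable g volume 0 t) {τ : ℕ → ℕ → ℝ}
    (hτ : ∀ n, ∀ k < n, τ n k ∈ Icc (gridPoint t n k) (gridPoint t n (k + 1))) :
    Tendsto (fun n => ∑ k ∈ Finset.range n,
        f (τ n k) * ∫ s in gridPoint t n k..gridPoint t n (k + 1), g s)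
      atTop (nhds (∫ s in (0 : ℝ)..t, f s * g s)) := by
  have hfg : IntervalIntegrable (fun s => f s * g s) volume 0 t :=
    hg.continuousOn_mul (by rwa [uIcc_of_le ht])
  set G := ∫ s in (0 : ℝ)..t, |g s|
  have hG : 0 ≤ G := intervalIntegral.integral_nonneg ht fun _ _ => abs_nonneg _
  refine Metric.tendsto_nhds.2 fun ε hε => ?_
  obtain ⟨ρ, hρ, hf_unif⟩ := Metric.uniformContinuousOn_iff_le.1
    (isCompact_Icc.uniformContinuousOn_of_continuous hf) (ε / (G + 1)) (by positivity)
  filter_upwards [(tendsto_div_natCast_atTop t).eventually_lt_const hρ, eventually_ne_atTop 0]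
    with n hmesh hn
  calc _ ≤ ε / (G + 1) * G :=
        abs_sum_tag_mul_integral_sub_le ht hg hfg hn
          (fun r hr s hs hrs => hf_unif r hr s hs (hrs.trans hmesh.le)) (hτ n)
    _ < ε := by
        rw [div_mul_eq_mul_div, div_lt_iff₀ (by positivity)]
        linarith [mul_add ε G 1]

end Grid

/-- The discounted Lyapunov function `e ^ (-κ s) (1 + y ^ 2)` of the exponential moment bound. -/
def lyapunov (κ s y : ℝ) : ℝ := Real.exp (-(κ * s)) * (1 + y ^ 2)

/-- The noise part of the increment of `lyapunov κ` from the state `y` at time `p` to time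
`q`, driven by the noise increment `z`, minus a compensator that makes its exponential have mean
at most `1` for Gaussian `z`. The factor `1 / (1 - 2 (q - p))`, which tends to `1` as the mesh
goes to `0`, accounts for the Gaussian integral of `exp (a z ^ 2)`. -/
def stepExponent (κ p q y z : ℝ) : ℝ :=
  Real.exp (-(κ * q)) * (2 * y * z + z ^ 2) -
    2 * ((q - p) / (1 - 2 * (q - p))) * lyapunov κ p y

lemma measurable_uncurry_stepExponent (κ p q : ℝ) :
    Measurable (Function.uncurry (stepExponent κ p q)) := by
  unfold Function.uncurry stepExponent lyapunov
  fun_prop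

lemma lintegral_exp_stepExponent_gaussianReal_le_one {κ p q : ℝ} (hκ : 0 ≤ κ) (hp : 0 ≤ p)
    (hpq : p ≤ q) (hstep : 2 * (q - p) < 1) (y : ℝ) :
    ∫⁻ z, ENNReal.ofReal (Real.exp (stepExponent κ p q y z)) ∂(gaussianReal 0 (q - p).toNNReal)
      ≤ 1 := by
  have hv : ((q - p).toNNReal : ℝ) = q - p := Real.coe_toNNReal _ (sub_nonneg.2 hpq)
  have hdecay : Real.exp (-(κ * q)) ≤ Real.exp (-(κ * p)) := by gcongr
  have hle_one : Real.exp (-(κ * q)) ≤ 1 :=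
    Real.exp_le_one_iff.2 (neg_nonpos.2 (mul_nonneg hκ (hp.trans hpq)))
  have hgauss := lintegral_exp_sq_increment_gaussianReal_le (Real.exp_pos _).le hle_one
    (hv.symm ▸ hstep) y
  rw [hv] at hgauss
  set comp := 2 * ((q - p) / (1 - 2 * (q - p))) * lyapunov κ p y
  have hcomp : 2 * ((q - p) / (1 - 2 * (q - p))) * (Real.exp (-(κ * q)) * (1 + y ^ 2)) ≤ comp := by
    have : 0 ≤ (q - p) / (1 - 2 * (q - p)) := div_nonneg (by linarith) (by linarith)
    exact mul_le_mul_of_nonneg_left (mul_le_mul_of_nonneg_right hdecay (by positivity))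
      (by positivity)
  calc _ = (∫⁻ z, ENNReal.ofReal (Real.exp (Real.exp (-(κ * q)) * (2 * y * z + z ^ 2)))
          ∂(gaussianReal 0 (q - p).toNNReal)) * ENNReal.ofReal (Real.exp (-comp)) := by
        rw [← lintegral_mul_const _ (by fun_prop)]
        simp only [stepExponent, sub_eq_add_neg, Real.exp_add,
          ENNReal.ofReal_mul (Real.exp_pos _).le, comp]
    _ ≤ ENNReal.ofReal (Real.exp comp) * ENNReal.ofReal (Real.exp (-comp)) := by
        gcongr
        exact hgauss.trans (ENNReal.ofReal_le_ofReal (Real.exp_le_exp.2 hcomp))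
    _ = 1 := by
        rw [← ENNReal.ofReal_mul (Real.exp_pos _).le, ← Real.exp_add, add_neg_cancel,
          Real.exp_zero, ENNReal.ofReal_one]

section Pathwise

variable {κ t : ℝ} {x w b : ℝ → ℝ}

/- Writing `A` for the drift increment, `y' ^ 2 - y ^ 2 = 2 y z + z ^ 2 + 2 y' A - A ^ 2`.
Evaluating the drift term at the right endpoint `y'` leaves an error `-A ^ 2` of the good sign. -/
lemma lyapunov_sub_le_stepExponent_add {p q y y' z A : ℝ} (hincr : y' - y = A + z) :
    lyapunov κ q y' - lyapunov κ p y ≤ stepExponent κ p q y z +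
      (2 * (Real.exp (-(κ * q)) * y' * A) +
        (1 + y ^ 2) * (Real.exp (-(κ * q)) - Real.exp (-(κ * p))) +
        2 / (1 - 2 * (q - p)) * (lyapunov κ p y * (q - p))) := by
  obtain rfl : y' = y + A + z := by linarith
  have hA : 0 ≤ Real.exp (-(κ * q)) * A ^ 2 := by positivity
  have hcomp : 2 * ((q - p) / (1 - 2 * (q - p))) * lyapunov κ p y =
      2 / (1 - 2 * (q - p)) * (lyapunov κ p y * (q - p)) := by ring
  rw [stepExponent, hcomp]
  unfold lyapunov
  linarith

/-- The part of the increment of `lyapunov κ` along `x` over the uniform partition of `[0, t]` into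
`n` intervals that `stepExponent` does not account for, written with tagged Riemann sums. -/
def driftRemainder (κ t : ℝ) (x b : ℝ → ℝ) (n : ℕ) : ℝ :=
  2 * (∑ k ∈ Finset.range n,
      Real.exp (-(κ * gridPoint t n (k + 1))) * x (gridPoint t n (k + 1)) *
        ∫ s in gridPoint t n k..gridPoint t n (k + 1), b s) +
    (∑ k ∈ Finset.range n, (1 + x (gridPoint t n k) ^ 2) *
      ∫ s in gridPoint t n k..gridPoint t n (k + 1), -κ * Real.exp (-(κ * s))) +
    2 / (1 - 2 * (t / n)) * (∑ k ∈ Finset.range n,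
      lyapunov κ (gridPoint t n k) (x (gridPoint t n k)) *
        ∫ _ in gridPoint t n k..gridPoint t n (k + 1), 1)

/-- The exponent of the discrete-time supermartingale at the final node of the uniform partition
of `[0, t]` into `n` intervals, for the path `x` driven by the noise path `w`. -/
def discreteExponent (κ t : ℝ) (x w : ℝ → ℝ) (n : ℕ) : ℝ :=
  lyapunov κ 0 (x 0) + ∑ k ∈ Finset.range n,
    stepExponent κ (gridPoint t n k) (gridPoint t n (k + 1)) (x (gridPoint t n k))
      (w (gridPoint t n (k + 1)) - w (gridPoint t n k))

lemma integral_neg_mul_exp_neg_mul (κ p q : ℝ) :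
    ∫ s in p..q, -κ * Real.exp (-(κ * s)) = Real.exp (-(κ * q)) - Real.exp (-(κ * p)) := by
  have hderiv (s : ℝ) :
      HasDerivAt (fun r => Real.exp (-(κ * r))) (-κ * Real.exp (-(κ * s))) s := by
    simpa only [id, mul_one, mul_comm] using ((hasDerivAt_id s).const_mul κ).fun_neg.exp
  exact intervalIntegral.integral_eq_sub_of_hasDerivAt (fun s _ => hderiv s)
    (Continuous.intervalIntegrable (by fun_prop) _ _)

lemma lyapunov_le_discreteExponent_add_driftRemainder {n : ℕ} (hn : n ≠ 0)
    (hincr : ∀ k < n, x (gridPoint t n (k + 1)) - x (gridPoint t n k) =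
      (∫ s in gridPoint t n k..gridPoint t n (k + 1), b s) +
        (w (gridPoint t n (k + 1)) - w (gridPoint t n k))) :
    lyapunov κ t (x t) ≤ discreteExponent κ t x w n + driftRemainder κ t x b n := by
  have htelescope := Finset.sum_range_sub
    (fun k => lyapunov κ (gridPoint t n k) (x (gridPoint t n k))) n
  simp only [gridPoint_self hn, gridPoint_zero] at htelescope
  have hsteps := Finset.sum_le_sum fun k hk =>
    lyapunov_sub_le_stepExponent_add (κ := κ) (p := gridPoint t n k) (q := gridPoint t n (k + 1))
      (hincr k (Finset.mem_range.1 hk))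
  rw [htelescope, sub_le_iff_le_add'] at hsteps
  refine hsteps.trans_eq ?_
  simp only [discreteExponent, driftRemainder, integral_neg_mul_exp_neg_mul, gridPoint_succ_sub,
    intervalIntegral.integral_const, smul_eq_mul, mul_one, Finset.sum_add_distrib, Finset.mul_sum,
    mul_assoc, add_assoc]

lemma continuousOn_lyapunov {s : Set ℝ} (hx : ContinuousOn x s) :
    ContinuousOn (fun r => lyapunov κ r (x r)) s := by
  unfold lyapunov
  fun_prop

lemma tendsto_driftRemainder (ht : 0 ≤ t) (hx : ContinuousOn x (Icc 0 t))
    (hb : IntervalIntegrable b volume 0 t) :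
    Tendsto (driftRemainder κ t x b) atTop (nhds
      (2 * (∫ s in (0 : ℝ)..t, Real.exp (-(κ * s)) * x s * b s) +
        (∫ s in (0 : ℝ)..t, (1 + x s ^ 2) * (-κ * Real.exp (-(κ * s)))) +
        2 * ∫ s in (0 : ℝ)..t, lyapunov κ s (x s) * 1)) := by
  have hleft : ∀ n, ∀ k < n, gridPoint t n k ∈ Icc (gridPoint t n k) (gridPoint t n (k + 1)) :=
    fun n k _ => left_mem_Icc.2 (gridPoint_mono ht k.le_succ)
  have hright : ∀ n, ∀ k < n,
      gridPoint t n (k + 1) ∈ Icc (gridPoint t n k) (gridPoint t n (k + 1)) :=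
    fun n k _ => right_mem_Icc.2 (gridPoint_mono ht k.le_succ)
  have hcomp : Tendsto (fun n : ℕ => 2 / (1 - 2 * (t / n))) atTop (nhds 2) := by
    have h := ((tendsto_div_natCast_atTop t).const_mul 2).const_sub 1
    simpa only [mul_zero, sub_zero, div_one, Pi.div_def] using
      (tendsto_const_nhds (x := (2 : ℝ))).div h (by norm_num)
  refine ((Tendsto.const_mul 2 ?_).add ?_).add (hcomp.mul ?_)
  · exact tendsto_sum_tag_mul_integral (f := fun s => Real.exp (-(κ * s)) * x s) ht
      (by fun_prop) hb hright
  · exact tendsto_sum_tag_mul_integral (f := fun s => 1 + x s ^ 2) ht (by fun_prop)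
      (Continuous.intervalIntegrable (by fun_prop) _ _) hleft
  · exact tendsto_sum_tag_mul_integral (f := fun s => lyapunov κ s (x s)) ht
      (continuousOn_lyapunov hx) intervalIntegrable_const hleft

lemma integral_drift_le_neg_mul_integral_lyapunov {c : ℝ} (ht : 0 ≤ t)
    (hx : ContinuousOn x (Icc 0 t)) (hb : IntervalIntegrable b volume 0 t)
    (hdrift : ∀ s ∈ Icc 0 t, x s * b s ≤ c * (1 + x s ^ 2)) :
    2 * (∫ s in (0 : ℝ)..t, Real.exp (-(κ * s)) * x s * b s) +
        (∫ s in (0 : ℝ)..t, (1 + x s ^ 2) * (-κ * Real.exp (-(κ * s)))) +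
        2 * (∫ s in (0 : ℝ)..t, lyapunov κ s (x s) * 1) ≤
      -((κ - 2 * (c + 1)) * ∫ s in (0 : ℝ)..t, lyapunov κ s (x s)) := by
  have hxI : ContinuousOn x (uIcc 0 t) := by rwa [uIcc_of_le ht]
  have hdrift_int : ∫ s in (0 : ℝ)..t, Real.exp (-(κ * s)) * x s * b s ≤
      c * ∫ s in (0 : ℝ)..t, lyapunov κ s (x s) := by
    rw [← intervalIntegral.integral_const_mul]
    refine intervalIntegral.integral_mono_on ht (hb.continuousOn_mul (by fun_prop))
      ((continuousOn_lyapunov hxI).intervalIntegrable.const_mul c) fun s hs => ?_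
    have := mul_le_mul_of_nonneg_left (hdrift s hs) (Real.exp_pos (-(κ * s))).le
    unfold lyapunov
    linarith
  have hdecay : ∫ s in (0 : ℝ)..t, (1 + x s ^ 2) * (-κ * Real.exp (-(κ * s))) =
      -κ * ∫ s in (0 : ℝ)..t, lyapunov κ s (x s) := by
    rw [← intervalIntegral.integral_const_mul]
    congr 1 with s
    rw [lyapunov]; ring
  simp only [hdecay, mul_one]
  linarith

lemma exists_tendsto_zero_lyapunov_add_integral_le {c : ℝ} (ht : 0 ≤ t)
    (hx : ContinuousOn x (Icc 0 t)) (hb : IntervalIntegrable b volume 0 t)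
    (hdrift : ∀ s ∈ Icc 0 t, x s * b s ≤ c * (1 + x s ^ 2))
    (hincr : ∀ n, ∀ k < n, x (gridPoint t n (k + 1)) - x (gridPoint t n k) =
      (∫ s in gridPoint t n k..gridPoint t n (k + 1), b s) +
        (w (gridPoint t n (k + 1)) - w (gridPoint t n k))) :
    ∃ r : ℕ → ℝ, Tendsto r atTop (nhds 0) ∧ ∀ᶠ n in atTop,
      lyapunov κ t (x t) + (κ - 2 * (c + 1)) * (∫ s in (0 : ℝ)..t, lyapunov κ s (x s)) ≤
        discreteExponent κ t x w n + r n := by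
  have hlim := tendsto_driftRemainder (κ := κ) ht hx hb
  refine ⟨_, tendsto_sub_nhds_zero_iff.2 hlim, ?_⟩
  filter_upwards [eventually_ne_atTop 0] with n hn
  have hstep := lyapunov_le_discreteExponent_add_driftRemainder (κ := κ) hn (hincr n)
  have hdrift_int := integral_drift_le_neg_mul_integral_lyapunov (κ := κ) ht hx hb hdrift
  linarith

end Pathwise

/-- The process `W` has the increments of a Brownian motion with respect to the filtration `F` on
`[0, T]`. Path continuity and the initial value are not part of the notion. -/
structure HasBrownianIncrementsOn {Ω : Type*} {mΩ : MeasurableSpace Ω} (F : Filtration ℝ mΩ)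
    (W : ℝ → Ω → ℝ) (T : ℝ) (P : Measure Ω) : Prop where
  adapted : ∀ t ∈ Icc 0 T, Measurable[F t] (W t)
  law : ∀ s t, 0 ≤ s → s ≤ t → t ≤ T →
    P.map (fun ω => W t ω - W s ω) = gaussianReal 0 (t - s).toNNReal
  indep : ∀ s t, 0 ≤ s → s ≤ t → t ≤ T →
    Indep (MeasurableSpace.comap (fun ω => W t ω - W s ω) inferInstance) (F s) P

section BrownianDriven

variable {Ω : Type*} {mΩ : MeasurableSpace Ω} {P : Measure Ω} {F : Filtration ℝ mΩ}
  {W X b : ℝ → Ω → ℝ} {T t κ : ℝ}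

lemma HasBrownianIncrementsOn.mono (hW : HasBrownianIncrementsOn F W T P) (ht : t ≤ T) :
    HasBrownianIncrementsOn F W t P where
  adapted s hs := hW.adapted s ⟨hs.1, hs.2.trans ht⟩
  law r s hr hrs hs := hW.law r s hr hrs (hs.trans ht)
  indep r s hr hrs hs := hW.indep r s hr hrs (hs.trans ht)

lemma measurable_discreteExponent (ht : 0 ≤ t) (hX : ∀ s ∈ Icc 0 t, Measurable (X s))
    (hW : ∀ s ∈ Icc 0 t, Measurable (W s)) (n : ℕ) :
    Measurable fun ω => discreteExponent κ t (X · ω) (W · ω) n := by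
  refine Measurable.add ?_ (Finset.measurable_sum _ fun k hk => ?_)
  · have := hX 0 (left_mem_Icc.2 ht)
    unfold lyapunov
    fun_prop
  · have hkn : k < n := Finset.mem_range.1 hk
    exact (measurable_uncurry_stepExponent κ _ _).comp ((hX _ (gridPoint_mem_Icc ht hkn.le)).prodMk
      ((hW _ (gridPoint_mem_Icc ht hkn)).sub (hW _ (gridPoint_mem_Icc ht hkn.le))))

lemma lintegral_exp_discreteExponent_le [IsFiniteMeasure P] (hκ : 0 ≤ κ) (ht : 0 ≤ t)
    (hW : HasBrownianIncrementsOn F W t P) (hX : ∀ s ∈ Icc 0 t, Measurable[F s] (X s)) {n : ℕ}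
    (hn : 2 * (t / n) < 1) :
    ∫⁻ ω, ENNReal.ofReal (Real.exp (discreteExponent κ t (X · ω) (W · ω) n)) ∂P ≤
      ∫⁻ ω, ENNReal.ofReal (Real.exp (1 + X 0 ω ^ 2)) ∂P := by
  let G : Filtration ℕ mΩ :=
    ⟨fun k => F (gridPoint t n k), fun _ _ hij => F.mono (gridPoint_mono ht hij), fun _ => F.le _⟩
  have hnode : ∀ k ≤ n, gridPoint t n k ∈ Icc 0 t := fun k hk => gridPoint_mem_Icc ht hk
  have hle : ∀ k, gridPoint t n k ≤ gridPoint t n (k + 1) := fun k => gridPoint_mono ht k.le_succ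
  have hX0 : Measurable[G 0] (X 0) := by
    have hG0 : G 0 = F 0 := congrArg F gridPoint_zero
    exact hG0 ▸ hX 0 (left_mem_Icc.2 ht)
  have hexp : ∀ ω, ENNReal.ofReal (Real.exp (discreteExponent κ t (X · ω) (W · ω) n)) =
      ENNReal.ofReal (Real.exp (1 + X 0 ω ^ 2)) * ∏ k ∈ Finset.range n,
        ENNReal.ofReal (Real.exp (stepExponent κ (gridPoint t n k) (gridPoint t n (k + 1))
          (X (gridPoint t n k) ω) (W (gridPoint t n (k + 1)) ω - W (gridPoint t n k) ω))) := by
    intro ω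
    rw [← ENNReal.ofReal_prod_of_nonneg fun _ _ => (Real.exp_pos _).le, ← Real.exp_sum,
      ← ENNReal.ofReal_mul (Real.exp_pos _).le, ← Real.exp_add]
    simp only [discreteExponent, lyapunov, mul_zero, neg_zero, Real.exp_zero, one_mul]
  simp only [hexp]
  refine lintegral_mul_prod_le_of_indep (F := G)
    (φ := fun k y z => ENNReal.ofReal
      (Real.exp (stepExponent κ (gridPoint t n k) (gridPoint t n (k + 1)) y z)))
    (by fun_prop) (fun k hk => hX _ (hnode k hk.le)) (fun k hk => ?_)
    (fun k hk => hW.indep _ _ (hnode k hk.le).1 (hle k) (hnode _ hk).2)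
    (fun k => (measurable_uncurry_stepExponent κ _ _).exp.ennreal_ofReal) (fun k hk y => ?_)
  · exact (hW.adapted _ (hnode _ hk)).sub
      ((hW.adapted _ (hnode k hk.le)).mono (F.mono (hle k)) le_rfl)
  · rw [hW.law _ _ (hnode k hk.le).1 (hle k) (hnode _ hk).2]
    exact lintegral_exp_stepExponent_gaussianReal_le_one hκ (hnode k hk.le).1 (hle k)
      (by rwa [gridPoint_succ_sub]) y

lemma ae_gridPoint_increment_eq (ht : 0 ≤ t)
    (hb : ∀ᵐ ω ∂P, IntervalIntegrable (b · ω) volume 0 t)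
    (hSDE : ∀ s ∈ Icc 0 t, ∀ᵐ ω ∂P, X s ω = X 0 ω + (∫ r in (0 : ℝ)..s, b r ω) + W s ω) :
    ∀ᵐ ω ∂P, ∀ n, ∀ k < n, X (gridPoint t n (k + 1)) ω - X (gridPoint t n k) ω =
      (∫ s in gridPoint t n k..gridPoint t n (k + 1), b s ω) +
        (W (gridPoint t n (k + 1)) ω - W (gridPoint t n k) ω) := by
  have hnodes : ∀ᵐ ω ∂P, ∀ n, ∀ k ≤ n, X (gridPoint t n k) ω =
      X 0 ω + (∫ r in (0 : ℝ)..gridPoint t n k, b r ω) + W (gridPoint t n k) ω := by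
    simp only [ae_all_iff]
    exact fun n k hk => hSDE _ (gridPoint_mem_Icc ht hk)
  filter_upwards [hnodes, hb] with ω hω hbω n k hk
  have hsub : ∀ j ≤ n, IntervalIntegrable (b · ω) volume 0 (gridPoint t n j) := fun j hj =>
    hbω.mono_set (by
      rw [uIcc_of_le (gridPoint_mem_Icc ht hj).1, uIcc_of_le ht]
      exact Icc_subset_Icc_right (gridPoint_mem_Icc ht hj).2)
  rw [hω n (k + 1) hk, hω n k hk.le,
    ← intervalIntegral.integral_interval_sub_left (hsub (k + 1) hk) (hsub k hk.le)]
  ring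

end BrownianDriven

lemma div_exp_eq_lyapunov (c β s y : ℝ) :
    (1 + y ^ 2) / Real.exp (2 * s * (c + 1) + s * β) = lyapunov (2 * (c + 1) + β) s y := by
  rw [lyapunov, Real.exp_neg, div_eq_inv_mul]
  ring_nf

lemma intervalIntegrable_comp_of_abs {f x : ℝ → ℝ} {p q : ℝ} (hf : Measurable f)
    (hx : ContinuousOn x (uIcc p q))
    (habs : IntervalIntegrable (fun s => |f (x s)|) volume p q) :
    IntervalIntegrable (fun s => f (x s)) volume p q := by
  rw [intervalIntegrable_iff] at habs ⊢
  have hx_meas : AEMeasurable x (volume.restrict (uIoc p q)) :=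
    (hx.mono uIoc_subset_uIcc).aemeasurable measurableSet_uIoc
  exact (integrable_norm_iff (hf.comp_aemeasurable hx_meas).aestronglyMeasurable).1 habs

lemma mul_le_mul_one_add_sq_of_nonneg {μ : ℝ → ℝ} {c : ℝ} (hc : 0 ≤ c)
    (hμ : ∀ x, 0 < x → x * μ x ≤ c * (1 + x ^ 2)) {x : ℝ} (hx : 0 ≤ x) :
    x * μ x ≤ c * (1 + x ^ 2) := by
  rcases hx.eq_or_lt with rfl | hpos
  · simpa using hc
  · exact hμ x hpos

theorem exponential_moment_bound_for_additive_noise_processes_general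
    {Ω : Type*} {mΩ : MeasurableSpace Ω} {P : Measure Ω} [IsProbabilityMeasure P] {T : ℝ}
    {F : Filtration ℝ mΩ} {W X b : ℝ → Ω → ℝ} (hW : HasBrownianIncrementsOn F W T P)
    (hXadapt : ∀ t ∈ Icc 0 T, Measurable[F t] (X t))
    (hXcont : ∀ᵐ ω ∂P, ContinuousOn (X · ω) (Icc 0 T))
    (hb : ∀ᵐ ω ∂P, IntervalIntegrable (b · ω) volume 0 T)
    (hSDE : ∀ t ∈ Icc 0 T, ∀ᵐ ω ∂P, X t ω = X 0 ω + (∫ s in (0 : ℝ)..t, b s ω) + W t ω)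
    {c β : ℝ} (hcβ : 0 ≤ 2 * (c + 1) + β)
    (hdrift : ∀ᵐ ω ∂P, ∀ s ∈ Icc 0 T, X s ω * b s ω ≤ c * (1 + X s ω ^ 2)) :
    ∀ t ∈ Icc 0 T,
      ∫⁻ ω, ENNReal.ofReal (Real.exp
          ((1 + X t ω ^ 2) / Real.exp (2 * t * (c + 1) + t * β)
            + ∫ s in (0 : ℝ)..t, β * (1 + X s ω ^ 2) / Real.exp (2 * s * (c + 1) + s * β))) ∂P
        ≤ ∫⁻ ω, ENNReal.ofReal (Real.exp (1 + X 0 ω ^ 2)) ∂P := by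
  intro t ht
  simp only [mul_div_assoc, div_exp_eq_lyapunov, intervalIntegral.integral_const_mul]
  have hsub : Icc 0 t ⊆ Icc 0 T := Icc_subset_Icc_right ht.2
  have hbt : ∀ᵐ ω ∂P, IntervalIntegrable (b · ω) volume 0 t := hb.mono fun ω hω =>
    hω.mono_set (by rwa [uIcc_of_le ht.1, uIcc_of_le (ht.1.trans ht.2)])
  have hW_meas : ∀ s ∈ Icc 0 t, Measurable (W s) := fun s hs =>
    (hW.adapted s (hsub hs)).mono (F.le s) le_rfl
  have hX_meas : ∀ s ∈ Icc 0 t, Measurable (X s) := fun s hs =>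
    (hXadapt s (hsub hs)).mono (F.le s) le_rfl
  refine lintegral_exp_le_of_asymptotic_le
    (measurable_discreteExponent (κ := 2 * (c + 1) + β) ht.1 hX_meas hW_meas) ?_ ?_
  · filter_upwards [hXcont, hbt, hdrift,
      ae_gridPoint_increment_eq ht.1 hbt fun s hs => hSDE s (hsub hs)] with ω hx hbω hd hincr
    simpa only [add_sub_cancel_left] using exists_tendsto_zero_lyapunov_add_integral_le
      (κ := 2 * (c + 1) + β) ht.1 (hx.mono hsub) hbω (fun s hs => hd s (hsub hs)) hincr
  · filter_upwards [(tendsto_div_natCast_atTop t).eventually_lt_const one_half_pos] with n hn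
    exact lintegral_exp_discreteExponent_le hcβ ht.1 (hW.mono ht.2)
      (fun s hs => hXadapt s (hsub hs)) (by linarith)

theorem exponential_moment_bound_for_additive_noise_processes
    {Ω : Type*} [MeasurableSpace Ω] (P : Measure Ω) [IsProbabilityMeasure P]
    (T : ℝ) (hT : 0 ≤ T)
    (F : ℝ → MeasurableSpace Ω)
    (hF_mono : ∀ s t : ℝ, s ≤ t → F s ≤ F t)
    (hF_le : ∀ t : ℝ, F t ≤ (inferInstance : MeasurableSpace Ω))
    (μ : ℝ → ℝ) (hμmeas : Measurable μ)
    (W X : ℝ → Ω → ℝ)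
    (hW0 : ∀ ω, W 0 ω = 0)
    (hWadapt : ∀ t ∈ Set.Icc (0:ℝ) T, @Measurable Ω ℝ (F t) _ (W t))
    (hWcont : ∀ ω, ContinuousOn (fun t => W t ω) (Set.Icc 0 T))
    (hWlaw : ∀ s t : ℝ, 0 ≤ s → s ≤ t → t ≤ T →
      Measure.map (fun ω => W t ω - W s ω) P = gaussianReal 0 (Real.toNNReal (t - s)))
    (hWindep : ∀ s t : ℝ, 0 ≤ s → s ≤ t → t ≤ T →
      Indep (MeasurableSpace.comap (fun ω => W t ω - W s ω) inferInstance) (F s) P)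
    (hXnonneg : ∀ t ω, 0 ≤ X t ω)
    (hXadapt : ∀ t ∈ Set.Icc (0:ℝ) T, @Measurable Ω ℝ (F t) _ (X t))
    (hXcont : ∀ ω, ContinuousOn (fun t => X t ω) (Set.Icc 0 T))
    (hXint : ∀ᵐ ω ∂P, IntervalIntegrable (fun s => |μ (X s ω)|) volume 0 T)
    (hSDE : ∀ t ∈ Set.Icc (0:ℝ) T, ∀ᵐ ω ∂P,
      X t ω = X 0 ω + (∫ s in (0:ℝ)..t, μ (X s ω)) + W t ω)
    (c β : ℝ) (hc : 0 ≤ c) (hβ : 0 ≤ β)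
    (hdrift : ∀ x : ℝ, 0 < x → x * μ x ≤ c * (1 + x ^ 2)) :
    ∀ t ∈ Set.Icc (0:ℝ) T,
      ∫⁻ ω, ENNReal.ofReal (Real.exp
          ((1 + (X t ω) ^ 2) / Real.exp (2 * t * (c + 1) + t * β)
            + ∫ s in (0:ℝ)..t, β * (1 + (X s ω) ^ 2) / Real.exp (2 * s * (c + 1) + s * β))) ∂P
        ≤ ∫⁻ ω, ENNReal.ofReal (Real.exp (1 + (X 0 ω) ^ 2)) ∂P := by
  exact exponential_moment_bound_for_additive_noise_processes_general (F := ⟨F, hF_mono, hF_le⟩)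
    ⟨hWadapt, hWlaw, hWindep⟩ hXadapt (ae_of_all P hXcont)
    (hXint.mono fun ω => intervalIntegrable_comp_of_abs hμmeas (uIcc_of_le hT ▸ hXcont ω))
    hSDE (by positivity)
    (ae_of_all P fun ω s _ => mul_le_mul_one_add_sq_of_nonneg hc hdrift (hXnonneg s ω))

end
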